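/- For every n ≥ 3 and every edge e of the cycle C_n, γ_g(C_n) = γ_g(C_n − e); that is, γ_g of a cycle equals γ_g of the path on the same number of vertices. -/

import Mathlib

open Classical

noncomputable section

namespace DomGame

variable {V : Type*} [Fintype V]

/-- Closed neighborhood of `v` as a `Finset`. -/
noncomputable def N (G : SimpleGraph V) (v : V) : Finset V :=
  Finset.univ.filter (fun u => G.Adj v u ∨ u = v)

/-- Legal moves given the set `S` of already dominated vertices. -/
noncomputable def moves (G : SimpleGraph V) (S : Finset V) : Finset V :=
  Finset.univ.filter (fun v => ¬ N G v ⊆ S)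

lemma card_lt {G : SimpleGraph V} {S : Finset V} (v : V) (hv : v ∈ moves G S) :
    (Finset.univ \ (S ∪ N G v)).card < (Finset.univ \ S).card := by
  simp only [moves, Finset.mem_filter] at hv
  obtain ⟨u, hu, hus⟩ := Finset.not_subset.mp hv.2
  apply Finset.card_lt_card
  refine ⟨Finset.sdiff_subset_sdiff (le_refl _) Finset.subset_union_left, ?_⟩
  intro hsub
  have := hsub (Finset.mem_sdiff.mpr ⟨Finset.mem_univ u, hus⟩)
  rw [Finset.mem_sdiff, Finset.mem_union] at this
  exact this.2 (Or.inr hu)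

mutual
/-- Number of moves with optimal play when it is Dominator's turn and
`S` is the set of already dominated vertices. -/
noncomputable def gameD (G : SimpleGraph V) (S : Finset V) : ℕ :=
  if h : (moves G S).Nonempty then
    1 + (moves G S).attach.inf' (by simpa using h)
      (fun v => gameS G (S ∪ N G v.1))
  else 0
termination_by (Finset.univ \ S).card
decreasing_by exact card_lt v.1 v.2

/-- Number of moves with optimal play when it is Staller's turn. -/
noncomputable def gameS (G : SimpleGraph V) (S : Finset V) : ℕ :=
  if h : (moves G S).Nonempty then
    1 + (moves G S).attach.sup' (by simpa using h)
      (fun v => gameD G (S ∪ N G v.1))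
  else 0
termination_by (Finset.univ \ S).card
decreasing_by exact card_lt v.1 v.2
end

/-- The (Dominator-start) game domination number. -/
noncomputable def gammaG (G : SimpleGraph V) : ℕ := gameD G ∅

/-- The Staller-start game domination number. -/
noncomputable def gammaG' (G : SimpleGraph V) : ℕ := gameS G ∅

lemma mem_N {G : SimpleGraph V} {u v : V} : u ∈ N G v ↔ G.Adj v u ∨ u = v := by
  simp [N]

lemma mem_moves {G : SimpleGraph V} {S : Finset V} {v : V} :
    v ∈ moves G S ↔ ∃ u ∈ N G v, u ∉ S := by
  simp [moves, Finset.not_subset]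

lemma gameD_le {G : SimpleGraph V} {S : Finset V} {v : V} (hv : v ∈ moves G S) :
    gameD G S ≤ 1 + gameS G (S ∪ N G v) := by
  rw [gameD, dif_pos ⟨v, hv⟩]
  exact Nat.add_le_add_left
    (Finset.inf'_le (fun v : moves G S => gameS G (S ∪ N G v.1)) (Finset.mem_attach _ ⟨v, hv⟩)) 1

lemma le_gameS {G : SimpleGraph V} {S : Finset V} {v : V} (hv : v ∈ moves G S) :
    1 + gameD G (S ∪ N G v) ≤ gameS G S := by
  rw [gameS, dif_pos ⟨v, hv⟩]
  exact Nat.add_le_add_left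
    (Finset.le_sup' (fun v : moves G S => gameD G (S ∪ N G v.1)) (Finset.mem_attach _ ⟨v, hv⟩)) 1

lemma gameS_le {G : SimpleGraph V} {S : Finset V} {b : ℕ}
    (h : ∀ v ∈ moves G S, 1 + gameD G (S ∪ N G v) ≤ b) : gameS G S ≤ b := by
  rw [gameS]
  split_ifs with hne
  · obtain ⟨v, -, hv⟩ := Finset.exists_mem_eq_sup' (Finset.attach_nonempty_iff.2 hne)
      (fun v : moves G S => gameD G (S ∪ N G v.1))
    rw [hv]
    exact h v.1 v.2
  · exact Nat.zero_le b

lemma le_gameD {G : SimpleGraph V} {S : Finset V} {b : ℕ} (hne : (moves G S).Nonempty)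
    (h : ∀ v ∈ moves G S, b ≤ 1 + gameS G (S ∪ N G v)) : b ≤ gameD G S := by
  rw [gameD, dif_pos hne]
  obtain ⟨v, -, hv⟩ := Finset.exists_mem_eq_inf' (Finset.attach_nonempty_iff.2 hne)
    (fun v : moves G S => gameS G (S ∪ N G v.1))
  rw [hv]
  exact h v.1 v.2

lemma gameD_eq_zero {G : SimpleGraph V} {S : Finset V} (h : ∀ v, v ∈ S) : gameD G S = 0 := by
  rw [gameD, dif_neg]
  rintro ⟨v, hv⟩
  obtain ⟨u, -, hu⟩ := mem_moves.1 hv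
  exact hu (h u)

/-! ### Lower bound: Staller always dominates exactly one new vertex -/

/-- The game domination number of a path or cycle on `n ≥ 3` vertices. -/
def cycleValue (n : ℕ) : ℕ := 2 * (n / 4) + min 1 (n % 4)

/-- `S` is a union of closed neighborhoods. -/
def IsUnionOfN (G : SimpleGraph V) (S : Finset V) : Prop :=
  ∀ u ∈ S, ∃ w, u ∈ N G w ∧ N G w ⊆ S

lemma IsUnionOfN.union_N {G : SimpleGraph V} {S : Finset V} (h : IsUnionOfN G S) (v : V) :
    IsUnionOfN G (S ∪ N G v) := by
  intro u hu
  rcases Finset.mem_union.1 hu with hu | hu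
  · obtain ⟨w, hw, hws⟩ := h u hu
    exact ⟨w, hw, hws.trans Finset.subset_union_left⟩
  · exact ⟨v, hu, Finset.subset_union_right⟩

/-- In a connected graph of maximum degree at most two, Staller can dominate a single vertex. -/
lemma exists_move_dominating_one {G : SimpleGraph V} {S : Finset V}
    (hdeg : ∀ v, (N G v).card ≤ 3) (hU : IsUnionOfN G S)
    (hcut : ∃ u ∈ S, ∃ v ∉ S, G.Adj u v) :
    ∃ u ∈ moves G S, (Finset.univ \ S).card = (Finset.univ \ (S ∪ N G u)).card + 1 := by
  obtain ⟨u, hu, v, hv, huv⟩ := hcut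
  refine ⟨u, mem_moves.2 ⟨v, mem_N.2 (Or.inl huv), hv⟩, ?_⟩
  obtain ⟨w, huw, hw⟩ := hU u hu
  have hwS : w ∈ S := hw (mem_N.2 (Or.inr rfl))
  have hwu : w ≠ u := by
    rintro rfl
    exact hv (hw (mem_N.2 (Or.inl huv)))
  have hwadj : G.Adj u w := by
    rcases mem_N.1 huw with h | h
    · exact h.symm
    · exact absurd h.symm hwu
  have hvw : v ≠ w := fun h => hv (h ▸ hwS)
  have hN : ({u, w, v} : Finset V) = N G u := by
    apply Finset.eq_of_subset_of_card_le
    · intro x hx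
      simp only [Finset.mem_insert, Finset.mem_singleton] at hx
      rcases hx with rfl | rfl | rfl <;> simp [mem_N, huv, hwadj]
    · rw [Finset.card_eq_three.2 ⟨u, w, v, hwu.symm, huv.ne, hvw.symm, rfl⟩]
      exact hdeg u
  have hsdiff : Finset.univ \ S = insert v (Finset.univ \ (S ∪ N G u)) := by
    ext x
    simp only [← hN, Finset.mem_sdiff, Finset.mem_univ, Finset.mem_union, Finset.mem_insert,
      Finset.mem_singleton, true_and]
    grind
  rw [hsdiff, Finset.card_insert_of_notMem]
  simp [← hN]

lemma cycleValue_le_gameD {G : SimpleGraph V} (hdeg : ∀ v, (N G v).card ≤ 3)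
    (hcut : ∀ S : Finset V, S.Nonempty → (∃ v, v ∉ S) → ∃ u ∈ S, ∃ v ∉ S, G.Adj u v) :
    ∀ (m : ℕ) (S : Finset V), (Finset.univ \ S).card = m → IsUnionOfN G S →
      cycleValue m ≤ gameD G S := by
  intro m
  induction m using Nat.strong_induction_on with
  | _ m ih =>
    intro S hm hU
    rcases Nat.eq_zero_or_pos m with rfl | hpos
    · exact Nat.zero_le _
    obtain ⟨x, hx⟩ := Finset.card_pos.1 (hm.symm ▸ hpos)
    apply le_gameD ⟨x, mem_moves.2 ⟨x, mem_N.2 (Or.inr rfl), (Finset.mem_sdiff.1 hx).2⟩⟩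
    intro v hv
    have hlt := card_lt v hv
    have hle : (Finset.univ \ S).card ≤ (Finset.univ \ (S ∪ N G v)).card + 3 := by
      have h : Finset.univ \ S ⊆ (Finset.univ \ (S ∪ N G v)) ∪ N G v := by
        intro y hy
        simp only [Finset.mem_sdiff, Finset.mem_univ, Finset.mem_union, true_and] at hy ⊢
        tauto
      exact (Finset.card_le_card h).trans
        ((Finset.card_union_le _ _).trans (Nat.add_le_add_left (hdeg v) _))
    rcases Nat.eq_zero_or_pos (Finset.univ \ (S ∪ N G v)).card with h0 | h1
    · unfold cycleValue
      omega
    obtain ⟨y, hy⟩ := Finset.card_pos.1 h1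
    obtain ⟨u, hu, hcard⟩ := exists_move_dominating_one hdeg (hU.union_N v)
      (hcut _ ⟨v, Finset.mem_union_right _ (mem_N.2 (Or.inr rfl))⟩
        ⟨y, (Finset.mem_sdiff.1 hy).2⟩)
    have hrec := ih _ (by omega) _ rfl ((hU.union_N v).union_N u)
    have hS := le_gameS hu
    unfold cycleValue at hrec ⊢
    omega

/-! ### Upper bound: Dominator's greedy strategy -/

/-- Weight of a run of `k` consecutive undominated vertices: `8` for each block of four, plus
`0`, `4`, `6`, `7` according to the remainder. -/
def runWeight (k : ℕ) : ℕ :=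
  8 * (k / 4) + 4 * min 1 (k % 4) + 2 * min 1 (k % 4 - 1) + (k % 4 - 2)

/-- Total weight of a list of runs, each given by its start and its length. -/
def totalWeight (T : List (ℕ × ℕ)) : ℕ := (T.map fun p => runWeight p.2).sum

lemma totalWeight_append (T T' : List (ℕ × ℕ)) :
    totalWeight (T ++ T') = totalWeight T + totalWeight T' := by
  simp [totalWeight]

lemma totalWeight_cons (p : ℕ × ℕ) (T : List (ℕ × ℕ)) :
    totalWeight (p :: T) = runWeight p.2 + totalWeight T := by
  simp [totalWeight]

lemma totalWeight_nil : totalWeight [] = 0 := rfl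

lemma dvd_totalWeight {d : ℕ} {T : List (ℕ × ℕ)} (h : ∀ p ∈ T, d ∣ runWeight p.2) :
    d ∣ totalWeight T := by
  apply List.dvd_sum
  intro x hx
  obtain ⟨p, hp, rfl⟩ := List.mem_map.1 hx
  exact h p hp

/-- Positions `x` and `y` coincide or are consecutive. -/
def Near (x y : ℕ) : Prop := x ≤ y + 1 ∧ y ≤ x + 1

/-- The undominated vertices, located by `pos` on the line `0, …, n - 1`, are the disjoint runs
listed in `T` from left to right, any two of which are at least three positions apart. -/
structure IsRuns (pos : V → ℕ) (n : ℕ) (S : Finset V) (T : List (ℕ × ℕ)) : Prop where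
  sep : T.Pairwise fun p q => p.1 + p.2 + 3 ≤ q.1
  bounds : ∀ p ∈ T, 1 ≤ p.1 ∧ p.1 + p.2 ≤ n
  notMem_iff : ∀ v, v ∉ S ↔ ∃ p ∈ T, p.1 ≤ pos v ∧ pos v < p.1 + p.2

/-- Every vertex outside `S` has the closed neighborhood it would have on the line. -/
def IsLinear (G : SimpleGraph V) (pos : V → ℕ) (S : Finset V) : Prop :=
  ∀ u ∉ S, ∀ v, u ∈ N G v ↔ Near (pos u) (pos v)

lemma IsLinear.mono {G : SimpleGraph V} {pos : V → ℕ} {S S' : Finset V}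
    (h : IsLinear G pos S) (hS : S ⊆ S') : IsLinear G pos S' :=
  fun u hu => h u fun hu' => hu (hS hu')

lemma IsRuns.replace {G : SimpleGraph V} {pos : V → ℕ} {n : ℕ} {S : Finset V}
    {l₁ l₂ q : List (ℕ × ℕ)} {p : ℕ × ℕ} (hR : IsRuns pos n S (l₁ ++ p :: l₂))
    (hL : IsLinear G pos S) (v : V) (hv : p.1 ≤ pos v + 1 ∧ pos v ≤ p.1 + p.2)
    (hq : q.Pairwise fun p q => p.1 + p.2 + 3 ≤ q.1)
    (hsub : ∀ r ∈ q, p.1 ≤ r.1 ∧ r.1 + r.2 ≤ p.1 + p.2)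
    (hcover : ∀ y, (p.1 ≤ y ∧ y < p.1 + p.2) ∧ ¬ Near y (pos v) ↔
      ∃ r ∈ q, r.1 ≤ y ∧ y < r.1 + r.2) :
    IsRuns pos n (S ∪ N G v) (l₁ ++ (q ++ l₂)) := by
  obtain ⟨hsep, hb, hmem⟩ := hR
  simp only [List.pairwise_append, List.pairwise_cons, List.mem_cons] at hsep
  obtain ⟨hs1, ⟨hp2, hs2⟩, h12⟩ := hsep
  have h1p : ∀ a ∈ l₁, a.1 + a.2 + 3 ≤ p.1 := fun a ha => h12 a ha p (Or.inl rfl)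
  have hbp := hb p (by simp)
  refine ⟨?_, ?_, ?_⟩
  · simp only [List.pairwise_append, List.mem_append]
    refine ⟨hs1, ⟨hq, hs2, fun a ha b hb => ?_⟩, ?_⟩
    · have := hp2 b hb
      have := hsub a ha
      omega
    · rintro a ha b (hb | hb)
      · have := h1p a ha
        have := hsub b hb
        omega
      · exact h12 a ha b (Or.inr hb)
  · intro r hr
    simp only [List.mem_append] at hr
    rcases hr with hr | hr | hr
    · exact hb r (by simp [hr])
    · have := hsub r hr
      omega
    · exact hb r (by simp [hr])
  · intro u
    have hu : u ∉ S ∪ N G v ↔ u ∉ S ∧ ¬ Near (pos u) (pos v) := by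
      rw [Finset.mem_union, not_or]
      exact and_congr_right fun h => not_congr (hL u h v)
    rw [hu, hmem]
    constructor
    · rintro ⟨⟨r, hr, hy⟩, hn⟩
      simp only [List.mem_append, List.mem_cons] at hr
      rcases hr with hr | rfl | hr
      · exact ⟨r, by simp [hr], hy⟩
      · obtain ⟨r', hr', hy'⟩ := (hcover (pos u)).1 ⟨hy, hn⟩
        exact ⟨r', by simp [hr'], hy'⟩
      · exact ⟨r, by simp [hr], hy⟩
    · rintro ⟨r, hr, hy⟩
      simp only [List.mem_append] at hr
      rcases hr with hr | hr | hr
      · refine ⟨⟨r, by simp [hr], hy⟩, ?_⟩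
        have := h1p r hr
        unfold Near
        omega
      · obtain ⟨hy', hn⟩ := (hcover (pos u)).2 ⟨r, hr, hy⟩
        exact ⟨⟨p, by simp, hy'⟩, hn⟩
      · refine ⟨⟨r, by simp [hr], hy⟩, ?_⟩
        have := hp2 r hr
        unfold Near
        omega

/-- Every move strictly decreases the total weight. -/
lemma IsRuns.exists_of_move {G : SimpleGraph V} {pos : V → ℕ} {n : ℕ} {S : Finset V}
    {T : List (ℕ × ℕ)} (hR : IsRuns pos n S T) (hL : IsLinear G pos S) {v : V}
    (hv : v ∈ moves G S) :
    ∃ T', IsRuns pos n (S ∪ N G v) T' ∧ totalWeight T' < totalWeight T := by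
  obtain ⟨u, huN, huS⟩ := mem_moves.1 hv
  have hnear := (hL u huS v).1 huN
  obtain ⟨⟨s, k⟩, hp, hu⟩ := (hR.notMem_iff u).1 huS
  obtain ⟨l₁, l₂, rfl⟩ := List.append_of_mem hp
  suffices h : ∃ q : List (ℕ × ℕ), (q.Pairwise fun p q => p.1 + p.2 + 3 ≤ q.1) ∧
      (∀ r ∈ q, s ≤ r.1 ∧ r.1 + r.2 ≤ s + k) ∧
      (∀ y, (s ≤ y ∧ y < s + k) ∧ ¬ Near y (pos v) ↔ ∃ r ∈ q, r.1 ≤ y ∧ y < r.1 + r.2) ∧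
      totalWeight q < runWeight k by
    obtain ⟨q, hq, hsub, hcover, hw⟩ := h
    refine ⟨_, hR.replace hL v ?_ hq hsub hcover, ?_⟩
    · unfold Near at hnear
      dsimp only at hu ⊢
      omega
    · simp only [totalWeight_append, totalWeight_cons]
      omega
  unfold Near at hnear ⊢
  dsimp only at hu
  generalize pos u = z at *
  generalize pos v = x at *
  rcases Nat.lt_or_ge x (s + 1) with hleft | hleft
  · refine ⟨[(min (x + 2) (s + k), s + k - (x + 2))], ?_⟩
    simp only [List.pairwise_singleton, List.mem_singleton, forall_eq, exists_eq_left,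
      totalWeight_cons, totalWeight_nil, true_and, runWeight]
    refine ⟨by omega, by omega, by omega⟩
  rcases Nat.lt_or_ge (x + 1) (s + k) with hright | hright
  · refine ⟨[(s, x - 1 - s), (x + 2, s + k - (x + 2))], ?_⟩
    simp only [List.pairwise_cons, List.mem_cons, List.not_mem_nil, or_false, forall_eq_or_imp,
      forall_eq, exists_eq_or_imp, exists_eq_left, totalWeight_cons, totalWeight_nil, runWeight]
    refine ⟨⟨by omega, by simp⟩, by omega, by omega, by omega⟩
  · refine ⟨[(s, x - 1 - s)], ?_⟩
    simp only [List.pairwise_singleton, List.mem_singleton, forall_eq, exists_eq_left,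
      totalWeight_cons, totalWeight_nil, true_and, runWeight]
    refine ⟨by omega, by omega, by omega⟩

/-- Dominator can take any `d ≤ 3` vertices from the left end of a run. -/
lemma IsRuns.exists_shorten {G : SimpleGraph V} {pos : V → ℕ} {n : ℕ} {S : Finset V}
    {l₁ l₂ : List (ℕ × ℕ)} {s k : ℕ} (hR : IsRuns pos n S (l₁ ++ (s, k) :: l₂))
    (hL : IsLinear G pos S) (hpos : ∀ i < n, ∃ v, pos v = i) {d : ℕ} (hd : 1 ≤ d) (hd3 : d ≤ 3)
    (hdk : d ≤ k) :
    ∃ v ∈ moves G S, IsRuns pos n (S ∪ N G v) (l₁ ++ ([(s + d, k - d)] ++ l₂)) := by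
  have hb := hR.bounds (s, k) (by simp)
  dsimp only at hb
  obtain ⟨v, hv⟩ := hpos (s + d - 2) (by omega)
  obtain ⟨u, hu⟩ := hpos s (by omega)
  refine ⟨v, mem_moves.2 ⟨u, ?_⟩, hR.replace hL v ?_ (List.pairwise_singleton _ _) ?_ ?_⟩
  · have huS : u ∉ S := (hR.notMem_iff u).2 ⟨(s, k), by simp, by dsimp only; omega⟩
    refine ⟨(hL u huS v).2 ?_, huS⟩
    unfold Near
    omega
  · dsimp only
    omega
  · simp only [List.mem_singleton, forall_eq]
    omega
  · simp only [List.mem_singleton, exists_eq_left, hv, Near]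
    omega

/-- Dominator's greedy reply. -/
lemma IsRuns.exists_greedy {G : SimpleGraph V} {pos : V → ℕ} {n : ℕ} {S : Finset V}
    {T : List (ℕ × ℕ)} (hR : IsRuns pos n S T) (hL : IsLinear G pos S)
    (hpos : ∀ i < n, ∃ v, pos v = i) (hT : ∃ p ∈ T, p.2 ≠ 0) :
    ∃ v ∈ moves G S, ∃ T', IsRuns pos n (S ∪ N G v) T' ∧
      (totalWeight T = totalWeight T' + 7 ∨
        2 ∣ totalWeight T ∧ totalWeight T = totalWeight T' + 6 ∨
        4 ∣ totalWeight T ∧ totalWeight T = totalWeight T' + 4) := by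
  have take : ∀ p ∈ T, ∀ d, 1 ≤ d → d ≤ 3 → d ≤ p.2 → ∃ v ∈ moves G S, ∃ T',
      IsRuns pos n (S ∪ N G v) T' ∧
        totalWeight T + runWeight (p.2 - d) = totalWeight T' + runWeight p.2 := by
    rintro ⟨s, k⟩ hp d hd hd3 hdk
    obtain ⟨l₁, l₂, rfl⟩ := List.append_of_mem hp
    obtain ⟨v, hv, hR'⟩ := hR.exists_shorten hL hpos hd hd3 hdk
    refine ⟨v, hv, _, hR', ?_⟩
    simp only [totalWeight_append, totalWeight_cons, totalWeight_nil]
    omega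
  by_cases h3 : ∃ p ∈ T, p.2 % 4 = 3
  · obtain ⟨p, hp, hp3⟩ := h3
    obtain ⟨v, hv, T', hR', hw⟩ := take p hp 3 (by omega) (by omega) (by omega)
    refine ⟨v, hv, T', hR', Or.inl ?_⟩
    unfold runWeight at hw
    omega
  push Not at h3
  by_cases h2 : ∃ p ∈ T, p.2 % 4 = 2
  · have heven : 2 ∣ totalWeight T := dvd_totalWeight fun p hp => by
      have := h3 p hp
      unfold runWeight
      omega
    obtain ⟨p, hp, hp2⟩ := h2
    obtain ⟨v, hv, T', hR', hw⟩ := take p hp 2 (by omega) (by omega) (by omega)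
    refine ⟨v, hv, T', hR', Or.inr (Or.inl ⟨heven, ?_⟩)⟩
    unfold runWeight at hw
    omega
  push Not at h2
  have hfour : 4 ∣ totalWeight T := dvd_totalWeight fun p hp => by
    have := h3 p hp
    have := h2 p hp
    unfold runWeight
    omega
  obtain ⟨p, hp, hp0⟩ := hT
  have hp2 := h2 p hp
  have hp3 := h3 p hp
  obtain ⟨v, hv, T', hR', hw⟩ := take p hp (if p.2 % 4 = 1 then 1 else 3)
    (by split_ifs <;> omega) (by split_ifs <;> omega) (by split_ifs <;> omega)
  refine ⟨v, hv, T', hR', Or.inr (Or.inr ⟨hfour, ?_⟩)⟩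
  unfold runWeight at hw
  split_ifs at hw <;> omega

lemma gameS_le_totalWeight {G : SimpleGraph V} {pos : V → ℕ} {n : ℕ}
    (hpos : ∀ i < n, ∃ v, pos v = i) (m : ℕ) :
    ∀ (S : Finset V) (T : List (ℕ × ℕ)), totalWeight T = m → IsRuns pos n S T →
      IsLinear G pos S → gameS G S ≤ (m + 3) / 4 := by
  induction m using Nat.strong_induction_on with
  | _ m ih =>
    intro S T hm hR hL
    apply gameS_le
    intro v hv
    obtain ⟨T₁, hR₁, hlt⟩ := hR.exists_of_move hL hv
    have hL₁ := hL.mono (Finset.subset_union_left (s₂ := N G v))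
    by_cases hT : ∃ p ∈ T₁, p.2 ≠ 0
    · obtain ⟨w, hw, T₂, hR₂, hdrop⟩ := hR₁.exists_greedy hL₁ hpos hT
      have hD := gameD_le hw
      have hrec := ih _ (by omega) _ T₂ rfl hR₂ (hL₁.mono Finset.subset_union_left)
      omega
    · push Not at hT
      rw [gameD_eq_zero]
      · omega
      · intro u
        by_contra hu
        obtain ⟨p, hp, hpu⟩ := (hR₁.notMem_iff u).1 hu
        have := hT p hp
        omega

/-- If some first move leaves a single run of `n - 3` undominated vertices, Dominator finishes
within the value of the cycle. -/
lemma gameD_empty_le {G : SimpleGraph V} {pos : V → ℕ} {n s : ℕ} (hn : 3 ≤ n)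
    (hpos : ∀ i < n, ∃ v, pos v = i) (v : V) (hs : 1 ≤ s) (hs3 : s ≤ 3)
    (hN : ∀ u, u ∉ N G v ↔ s ≤ pos u ∧ pos u < s + (n - 3)) (hL : IsLinear G pos (N G v)) :
    gameD G ∅ ≤ cycleValue n := by
  have hv : v ∈ moves G ∅ := mem_moves.2 ⟨v, mem_N.2 (Or.inr rfl), Finset.notMem_empty v⟩
  have hR : IsRuns pos n (N G v) [(s, n - 3)] := by
    refine ⟨List.pairwise_singleton _ _, ?_, ?_⟩
    · simp only [List.mem_singleton, forall_eq]
      omega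
    · simpa using hN
  have hS := gameS_le_totalWeight hpos _ _ _ rfl hR hL
  have hD := gameD_le hv
  rw [Finset.empty_union] at hD
  simp only [totalWeight_cons, totalWeight_nil, runWeight] at hS
  unfold cycleValue
  omega

/-! ### Cycles and paths -/

lemma cycleGraph_adj_iff {n : ℕ} (hn : 3 ≤ n) {u v : Fin n} :
    (SimpleGraph.cycleGraph n).Adj u v ↔ u.1 = v.1 + 1 ∨ v.1 = u.1 + 1 ∨
      (u.1 = 0 ∧ v.1 + 1 = n) ∨ (v.1 = 0 ∧ u.1 + 1 = n) := by
  have hsub : ∀ x y : Fin n, (x - y).1 = if y.1 ≤ x.1 then x.1 - y.1 else n - y.1 + x.1 := by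
    intro x y
    rw [Fin.val_sub]
    split_ifs with h
    · rw [show n - y.1 + x.1 = x.1 - y.1 + n by omega, Nat.add_mod_right,
        Nat.mod_eq_of_lt (by omega)]
    · exact Nat.mod_eq_of_lt (by omega)
  rw [SimpleGraph.cycleGraph_adj', hsub, hsub]
  split_ifs <;> omega

lemma card_N_cycleGraph_le {n : ℕ} (hn : 3 ≤ n) (v : Fin n) :
    (N (SimpleGraph.cycleGraph n) v).card ≤ 3 := by
  let succ : Fin n := ⟨if v.1 + 1 = n then 0 else v.1 + 1, by split_ifs <;> omega⟩
  let pred : Fin n := ⟨if v.1 = 0 then n - 1 else v.1 - 1, by split_ifs <;> omega⟩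
  refine (Finset.card_le_card (t := {v, succ, pred}) fun u hu => ?_).trans Finset.card_le_three
  rw [mem_N, cycleGraph_adj_iff hn] at hu
  simp only [succ, pred, Finset.mem_insert, Finset.mem_singleton, Fin.ext_iff] at hu ⊢
  split_ifs <;> omega

/-- Position of `u` when the cycle is cut just before the vertex `c`. -/
def cutPos {n : ℕ} (c u : Fin n) : ℕ := if c.1 ≤ u.1 then u.1 - c.1 else u.1 + n - c.1

lemma cutPos_lt {n : ℕ} (c u : Fin n) : cutPos c u < n := by
  unfold cutPos
  split_ifs <;> omega

lemma cutPos_injective {n : ℕ} (c : Fin n) : Function.Injective (cutPos c) := by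
  intro u v h
  unfold cutPos at h
  rw [Fin.ext_iff]
  split_ifs at h <;> omega

lemma exists_cutPos_eq {n : ℕ} (c : Fin n) (i : ℕ) (hi : i < n) : ∃ u, cutPos c u = i := by
  refine ⟨⟨if i + c.1 < n then i + c.1 else i + c.1 - n, by split_ifs <;> omega⟩, ?_⟩
  unfold cutPos
  dsimp only
  split_ifs <;> omega

/-- Deleting an edge of the cycle leaves a path. -/
lemma exists_deleteEdges_adj_iff {n : ℕ} (hn : 3 ≤ n) (e : Sym2 (Fin n))
    (he : e ∈ (SimpleGraph.cycleGraph n).edgeSet) :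
    ∃ c : Fin n, ∀ u v, ((SimpleGraph.cycleGraph n).deleteEdges {e}).Adj u v ↔
      cutPos c u = cutPos c v + 1 ∨ cutPos c v = cutPos c u + 1 := by
  have key : ∀ a c : Fin n, (c.1 = a.1 + 1 ∨ (c.1 = 0 ∧ a.1 + 1 = n)) → ∀ u v,
      ((SimpleGraph.cycleGraph n).deleteEdges {s(a, c)}).Adj u v ↔
        cutPos c u = cutPos c v + 1 ∨ cutPos c v = cutPos c u + 1 := by
    intro a c hac u v
    simp only [SimpleGraph.deleteEdges_adj, cycleGraph_adj_iff hn, Set.mem_singleton_iff,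
      Sym2.eq_iff, Fin.ext_iff, cutPos]
    split_ifs <;> omega
  induction e using Sym2.ind with
  | _ a b =>
    rw [SimpleGraph.mem_edgeSet, cycleGraph_adj_iff hn] at he
    by_cases hab : b.1 = a.1 + 1 ∨ (b.1 = 0 ∧ a.1 + 1 = n)
    · exact ⟨b, key a b hab⟩
    · exact ⟨a, Sym2.eq_swap (a := a) (b := b) ▸ key b a (by omega)⟩

lemma exists_cut_adj {n : ℕ} {G : SimpleGraph (Fin n)} {c : Fin n}
    (hG : ∀ u v, cutPos c u = cutPos c v + 1 → G.Adj u v)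
    (S : Finset (Fin n)) (hS : S.Nonempty) (hS' : ∃ v, v ∉ S) :
    ∃ u ∈ S, ∃ v ∉ S, G.Adj u v := by
  by_contra! hcon
  have key : ∀ d, ∀ u ∈ S, ∀ v, cutPos c u = cutPos c v + d ∨ cutPos c v = cutPos c u + d →
      v ∈ S := by
    intro d
    induction d with
    | zero =>
      intro u hu v huv
      rwa [← cutPos_injective c (show cutPos c u = cutPos c v by omega)]
    | succ d ih =>
      intro u hu v huv
      by_contra hv
      have hu' := cutPos_lt c u
      have hv' := cutPos_lt c v
      rcases huv with huv | huv
      · obtain ⟨w, hw⟩ := exists_cutPos_eq c (cutPos c v + 1) (by omega)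
        exact hcon w (ih u hu w (by omega)) v hv (hG w v hw)
      · obtain ⟨w, hw⟩ := exists_cutPos_eq c (cutPos c u + d) (by omega)
        exact hcon w (ih u hu w (by omega)) v hv (hG v w (by omega)).symm
  obtain ⟨u, hu⟩ := hS
  obtain ⟨v, hv⟩ := hS'
  rcases le_total (cutPos c u) (cutPos c v) with h | h
  · exact hv (key (cutPos c v - cutPos c u) u hu v (by omega))
  · exact hv (key (cutPos c u - cutPos c v) u hu v (by omega))

lemma cycleValue_le_gammaG {n : ℕ} (hn : 3 ≤ n) {G : SimpleGraph (Fin n)} {c : Fin n}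
    (hle : G ≤ SimpleGraph.cycleGraph n)
    (hG : ∀ u v, cutPos c u = cutPos c v + 1 → G.Adj u v) : cycleValue n ≤ gammaG G := by
  refine cycleValue_le_gameD (fun v => ?_) (exists_cut_adj hG) n ∅ (by simp)
    fun u hu => absurd hu (Finset.notMem_empty u)
  refine (Finset.card_le_card fun u hu => ?_).trans (card_N_cycleGraph_le hn v)
  exact mem_N.2 ((mem_N.1 hu).imp_left fun h => hle h)

lemma gammaG_cycleGraph_le {n : ℕ} (hn : 3 ≤ n) :
    gammaG (SimpleGraph.cycleGraph n) ≤ cycleValue n := by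
  have hN : ∀ u, u ∉ N (SimpleGraph.cycleGraph n) ⟨0, by omega⟩ ↔
      2 ≤ u.1 ∧ u.1 < 2 + (n - 3) := by
    intro u
    have hu := u.2
    rw [mem_N, cycleGraph_adj_iff hn, Fin.ext_iff]
    dsimp only
    omega
  refine gameD_empty_le hn (fun i hi => ⟨⟨i, hi⟩, rfl⟩) _ (by omega) (by omega) hN fun u hu v => ?_
  have := (hN u).1 hu
  simp only [mem_N, cycleGraph_adj_iff hn, Fin.ext_iff, Near]
  omega

lemma gammaG_path_le {n : ℕ} (hn : 3 ≤ n) {G : SimpleGraph (Fin n)} {c : Fin n}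
    (hG : ∀ u v, G.Adj u v ↔ cutPos c u = cutPos c v + 1 ∨ cutPos c v = cutPos c u + 1) :
    gammaG G ≤ cycleValue n := by
  have hnear : ∀ u v, u ∈ N G v ↔ Near (cutPos c u) (cutPos c v) := by
    intro u v
    rw [mem_N, hG, ← (cutPos_injective c).eq_iff, Near]
    omega
  obtain ⟨v, hv⟩ := exists_cutPos_eq c 1 (by omega)
  refine gameD_empty_le (s := 3) hn (exists_cutPos_eq c) v (by omega) le_rfl (fun u => ?_)
    fun u _ => hnear u
  have := cutPos_lt c u
  rw [hnear, hv, Near]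
  omega

end DomGame

open DomGame in
/-- For `n ≥ 3`, removing any edge from the cycle `C_n` does not change the
game domination number. -/
theorem gameD_cycle_edge_removal (n : ℕ) (hn : 3 ≤ n)
    (e : Sym2 (Fin n)) (he : e ∈ (SimpleGraph.cycleGraph n).edgeSet) :
    gammaG (SimpleGraph.cycleGraph n) =
      gammaG ((SimpleGraph.cycleGraph n).deleteEdges {e}) := by
  obtain ⟨c, hc⟩ := exists_deleteEdges_adj_iff hn e he
  have hadj := fun u v h => (hc u v).2 (Or.inl h)
  have hle : (SimpleGraph.cycleGraph n).deleteEdges {e} ≤ SimpleGraph.cycleGraph n :=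
    SimpleGraph.deleteEdges_le _
  exact ((gammaG_cycleGraph_le hn).trans (cycleValue_le_gammaG hn hle hadj)).antisymm
    ((gammaG_path_le hn hc).trans
      (cycleValue_le_gammaG hn le_rfl fun u v h => hle (hadj u v h)))
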